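/- Let u, ε, q ∈ ℝ and let X : ℝ³ → ℝ³ be the vector field X(θ1,θ2,θ3) = (u sinθ1 cosθ2 + ε sin2θ1 cos2θ2, u sinθ2 cosθ3 + ε sin2θ2 cos2θ3, u sinθ3 cosθ1 + ε sin2θ3 cos2θ1 + q(1 − cos(θ1−θ2)) sin2θ3). Then the functions h1 = sinθ1, h2 = sinθ2, h3 = sinθ3 are trigonometric invariant algebraic surfaces for X: the directional derivative of h_i along X satisfies X·∇h_i = K_i·h_i, with K1(θ) = cosθ1·(u cosθ2 + 2ε cosθ1 cos2θ2), K2(θ) = cosθ2·(u cosθ3 + 2ε cosθ2 cos2θ3), and K3(θ) = cosθ3·(u cosθ1 + 2ε cos2θ1 cosθ3 + 2q(1 − cos(θ1−θ2)) cosθ3). -/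

import Mathlib

open Real

/-!
Along `X`, each coordinate `θᵢ` evolves by `a sin θᵢ + b sin 2θᵢ` with coefficients `a`, `b`
depending on `θ`. Since `sin 2θᵢ = 2 sin θᵢ cos θᵢ`, this rate is `sin θᵢ` times `a + 2b cos θᵢ`,
and the chain rule contributes the remaining factor `cos θᵢ` of the cofactor.
-/

section Cofactor

variable {E : Type*} [NormedAddCommGroup E] [NormedSpace ℝ E]

/-- `HasCofactor X h K` says that `h` satisfies `X·∇h = K·h`; for smooth `h` and `K` this is the
invariance of the surface `h = 0` under the flow of the vector field `X`. Smoothness is not part of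
the notion, and `fderiv ℝ h x` is `0` where `h` is not differentiable. -/
def HasCofactor (X : E → E) (h K : E → ℝ) : Prop :=
  ∀ x, fderiv ℝ h x (X x) = K x * h x

theorem hasCofactor_sin_comp {X : E → E} {f a b : E → ℝ} {f' : E → E →L[ℝ] ℝ}
    (hf : ∀ x, HasFDerivAt f (f' x) x)
    (hX : ∀ x, f' x (X x) = a x * sin (f x) + b x * sin (2 * f x)) :
    HasCofactor X (fun x => sin (f x)) fun x => cos (f x) * (a x + 2 * b x * cos (f x)) := by
  intro x
  calc fderiv ℝ (fun x => sin (f x)) x (X x)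
      = cos (f x) * f' x (X x) := by
        rw [(hf x).sin.fderiv, smul_apply, smul_eq_mul]
    _ = cos (f x) * (a x * sin (f x) + b x * (2 * sin (f x) * cos (f x))) := by
        rw [hX, sin_two_mul]
    _ = cos (f x) * (a x + 2 * b x * cos (f x)) * sin (f x) := by ring

end Cofactor

/-- for the vector field
`X(θ₁,θ₂,θ₃) = (u sinθ₁ cosθ₂ + ε sin2θ₁ cos2θ₂,
u sinθ₂ cosθ₃ + ε sin2θ₂ cos2θ₃,
u sinθ₃ cosθ₁ + ε sin2θ₃ cos2θ₁ + q(1 − cos(θ₁−θ₂)) sin2θ₃)`,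
the functions `h₁ = sinθ₁`, `h₂ = sinθ₂`, `h₃ = sinθ₃` are trigonometric
invariant algebraic surfaces: `X·∇hᵢ = Kᵢ·hᵢ` with
`K₁ = cosθ₁(u cosθ₂ + 2ε cosθ₁ cos2θ₂)`,
`K₂ = cosθ₂(u cosθ₃ + 2ε cosθ₂ cos2θ₃)`,
`K₃ = cosθ₃(u cosθ₁ + 2ε cos2θ₁ cosθ₃ + 2q(1 − cos(θ₁−θ₂)) cosθ₃)`. -/
theorem stmt17 (u ε q : ℝ) (X : ℝ × ℝ × ℝ → ℝ × ℝ × ℝ)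
    (hX : X = fun θ : ℝ × ℝ × ℝ =>
      (u * sin θ.1 * cos θ.2.1 + ε * sin (2 * θ.1) * cos (2 * θ.2.1),
       u * sin θ.2.1 * cos θ.2.2 + ε * sin (2 * θ.2.1) * cos (2 * θ.2.2),
       u * sin θ.2.2 * cos θ.1 + ε * sin (2 * θ.2.2) * cos (2 * θ.1) +
         q * (1 - cos (θ.1 - θ.2.1)) * sin (2 * θ.2.2))) :
    ∀ θ : ℝ × ℝ × ℝ,
      fderiv ℝ (fun w : ℝ × ℝ × ℝ => sin w.1) θ (X θ) =
        (cos θ.1 * (u * cos θ.2.1 + 2 * ε * cos θ.1 * cos (2 * θ.2.1))) *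
          sin θ.1 ∧
      fderiv ℝ (fun w : ℝ × ℝ × ℝ => sin w.2.1) θ (X θ) =
        (cos θ.2.1 * (u * cos θ.2.2 + 2 * ε * cos θ.2.1 * cos (2 * θ.2.2))) *
          sin θ.2.1 ∧
      fderiv ℝ (fun w : ℝ × ℝ × ℝ => sin w.2.2) θ (X θ) =
        (cos θ.2.2 * (u * cos θ.1 + 2 * ε * cos (2 * θ.1) * cos θ.2.2 +
          2 * q * (1 - cos (θ.1 - θ.2.1)) * cos θ.2.2)) * sin θ.2.2 := by
  have h₁ : HasCofactor X (fun w => sin w.1) fun w =>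
      cos w.1 * (u * cos w.2.1 + 2 * (ε * cos (2 * w.2.1)) * cos w.1) :=
    hasCofactor_sin_comp (fun _ => hasFDerivAt_fst) fun w => by
      simp only [hX, ContinuousLinearMap.coe_fst']
      ring
  have h₂ : HasCofactor X (fun w => sin w.2.1) fun w =>
      cos w.2.1 * (u * cos w.2.2 + 2 * (ε * cos (2 * w.2.2)) * cos w.2.1) :=
    hasCofactor_sin_comp (fun _ => hasFDerivAt_snd.fst) fun w => by
      simp only [hX, ContinuousLinearMap.comp_apply, ContinuousLinearMap.coe_fst',
        ContinuousLinearMap.coe_snd']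
      ring
  have h₃ : HasCofactor X (fun w => sin w.2.2) fun w =>
      cos w.2.2 * (u * cos w.1 +
        2 * (ε * cos (2 * w.1) + q * (1 - cos (w.1 - w.2.1))) * cos w.2.2) :=
    hasCofactor_sin_comp (fun _ => hasFDerivAt_snd.snd) fun w => by
      simp only [hX, ContinuousLinearMap.comp_apply, ContinuousLinearMap.coe_snd']
      ring
  exact fun θ => ⟨(h₁ θ).trans (by ring), (h₂ θ).trans (by ring), (h₃ θ).trans (by ring)⟩
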